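/- In any 2-crossed module (L →δ H →∂ G, ▷, {·,·}_p), for all h₁, h₂, h₃ ∈ H one has {h₁, h₂h₃}_p = (∂(h₁) ▷ h₂) ▷' ({h₁, h₂⁻¹}_p⁻¹ · {h₁, h₃}_p). -/

import Mathlib

/-- A 2-crossed module `(L --δ--> H --∂--> G, ▷, Peiffer lifting)`:
groups `G H L`, homomorphisms `δ : L → H` (field `δ`) and `∂ : H → G` (field `bd`)
with `∂ ∘ δ = 1`, left actions `▷` of `G` on `H` and `L` by automorphisms
(fields `actH`, `actL`; `G` acts on itself by conjugation), and the Peiffer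
lifting `{·,·}_p : H × H → L` (field `pf`), subject to the usual axioms. -/
structure TwoCrossedModule (G H L : Type*) [Group G] [Group H] [Group L] where
  δ : L →* H
  bd : H →* G
  actH : G →* MulAut H
  actL : G →* MulAut L
  pf : H → H → L
  comp_eq_one : ∀ l : L, bd (δ l) = 1
  -- (i) g ▷ ∂(h) = ∂(g ▷ h), where G acts on itself by conjugation
  act_bd : ∀ (g : G) (h : H), g * bd h * g⁻¹ = bd (actH g h)
  -- (i) g ▷ δ(l) = δ(g ▷ l)
  act_δ : ∀ (g : G) (l : L), actH g (δ l) = δ (actL g l)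
  -- (ii) g ▷ {h₁,h₂}_p = {g ▷ h₁, g ▷ h₂}_p
  act_pf : ∀ (g : G) (h₁ h₂ : H), actL g (pf h₁ h₂) = pf (actH g h₁) (actH g h₂)
  -- (iii) δ({h₁,h₂}_p) = h₁h₂h₁⁻¹·(∂(h₁) ▷ h₂⁻¹)
  δ_pf : ∀ h₁ h₂ : H, δ (pf h₁ h₂) = h₁ * h₂ * h₁⁻¹ * actH (bd h₁) h₂⁻¹
  -- (iv) {δ(l₁), δ(l₂)}_p = l₁l₂l₁⁻¹l₂⁻¹
  pf_δ_δ : ∀ l₁ l₂ : L, pf (δ l₁) (δ l₂) = l₁ * l₂ * l₁⁻¹ * l₂⁻¹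
  -- (v) {h₁h₂, h₃}_p = {h₁, h₂h₃h₂⁻¹}_p · (∂(h₁) ▷ {h₂,h₃}_p)
  pf_mul_left : ∀ h₁ h₂ h₃ : H,
    pf (h₁ * h₂) h₃ = pf h₁ (h₂ * h₃ * h₂⁻¹) * actL (bd h₁) (pf h₂ h₃)
  -- (vi) {h₁, h₂h₃}_p = {h₁,h₂}_p · {h₁,h₃}_p · {⟨h₁,h₃⟩_p⁻¹, ∂(h₁) ▷ h₂}_p,
  -- where ⟨h₁,h₃⟩_p = h₁h₃h₁⁻¹·(∂(h₁) ▷ h₃⁻¹) is the Peiffer commutator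
  pf_mul_right : ∀ h₁ h₂ h₃ : H,
    pf h₁ (h₂ * h₃) = pf h₁ h₂ * pf h₁ h₃ *
      pf (h₁ * h₃ * h₁⁻¹ * actH (bd h₁) h₃⁻¹)⁻¹ (actH (bd h₁) h₂)
  -- (vii) {δ(l), h}_p · {h, δ(l)}_p = l·(∂(h) ▷ l⁻¹)
  pf_δ : ∀ (h : H) (l : L), pf (δ l) h * pf h (δ l) = l * actL (bd h) l⁻¹

namespace TwoCrossedModule

variable {G H L : Type*} [Group G] [Group H] [Group L]

/-- The map `▷' : H × L → L`, defined by `h ▷' l = l · {δ(l)⁻¹, h}_p`. -/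
def act' (X : TwoCrossedModule G H L) (h : H) (l : L) : L :=
  l * X.pf (X.δ l)⁻¹ h

end TwoCrossedModule

/-!
Axiom (vi) says that `{h₁, ·}_p` is a crossed homomorphism along `▷'`:
`{h₁, h₂h₃}_p = {h₁, h₂}_p · (∂(h₁) ▷ h₂) ▷' {h₁, h₃}_p`. As `▷'` acts by endomorphisms of `L`,
the case `h₃ = h₂⁻¹` gives `{h₁, h₂}_p = (∂(h₁) ▷ h₂) ▷' {h₁, h₂⁻¹}_p⁻¹`, and the two factors
merge under `▷'`.
-/

namespace TwoCrossedModule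

variable {G H L : Type*} [Group G] [Group H] [Group L] (X : TwoCrossedModule G H L)

theorem pf_one_right (h : H) : X.pf h 1 = 1 := by
  have pf_one_one : X.pf 1 1 = 1 := by simpa using X.pf_δ_δ 1 1
  simpa [pf_one_one] using X.pf_mul_right h 1 1

theorem δ_pf_δ (l : L) (h : H) : X.δ (X.pf (X.δ l) h) = X.δ l * h * (X.δ l)⁻¹ * h⁻¹ := by
  rw [X.δ_pf, X.comp_eq_one, map_one, MulAut.one_apply]

theorem pf_δ_δ_mul (l m : L) (h : H) :
    X.pf (X.δ l) (X.δ m * h) = l * m * l⁻¹ * X.pf (X.δ l) h * m⁻¹ := by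
  rw [X.pf_mul_right, ← X.δ_pf, X.comp_eq_one, map_one, MulAut.one_apply, ← map_inv,
    X.pf_δ_δ, X.pf_δ_δ]
  group

theorem pf_δ_mul (l m : L) (h : H) :
    X.pf (X.δ (l * m)) h = l * X.pf (X.δ m) h * l⁻¹ * X.pf (X.δ l) h := by
  have conj_eq : X.δ m * h * (X.δ m)⁻¹ = X.δ (X.pf (X.δ m) h) * h := by
    rw [δ_pf_δ, inv_mul_cancel_right]
  rw [map_mul, X.pf_mul_left, conj_eq, pf_δ_δ_mul, X.comp_eq_one, map_one, MulAut.one_apply,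
    inv_mul_cancel_right]

theorem act'_mul (h : H) (l m : L) : X.act' h (l * m) = X.act' h l * X.act' h m := by
  simp only [act', ← map_inv, mul_inv_rev, pf_δ_mul]
  group

/-- The endomorphism `h ▷' ·` of the group `L`. -/
def act'Hom (h : H) : L →* L :=
  MonoidHom.mk' (X.act' h) (X.act'_mul h)

theorem act'_inv (h : H) (l : L) : X.act' h l⁻¹ = (X.act' h l)⁻¹ :=
  map_inv (X.act'Hom h) l

theorem pf_mul_right_eq_mul_act' (h₁ h₂ h₃ : H) :
    X.pf h₁ (h₂ * h₃) = X.pf h₁ h₂ * X.act' (X.actH (X.bd h₁) h₂) (X.pf h₁ h₃) := by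
  rw [X.pf_mul_right, act', X.δ_pf, mul_assoc]

theorem pf_eq_act'_pf_inv_inv (h₁ h₂ : H) :
    X.pf h₁ h₂ = X.act' (X.actH (X.bd h₁) h₂) (X.pf h₁ h₂⁻¹)⁻¹ := by
  rw [act'_inv, eq_inv_iff_mul_eq_one, ← pf_mul_right_eq_mul_act', mul_inv_cancel, pf_one_right]

end TwoCrossedModule

/-- In any 2-crossed module,
`{h₁, h₂h₃}_p = (∂(h₁) ▷ h₂) ▷' ({h₁, h₂⁻¹}_p⁻¹ · {h₁, h₃}_p)`. -/
theorem pf_mul_right'' {G H L : Type*} [Group G] [Group H] [Group L]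
    (X : TwoCrossedModule G H L) (h₁ h₂ h₃ : H) :
    X.pf h₁ (h₂ * h₃) =
      X.act' (X.actH (X.bd h₁) h₂) ((X.pf h₁ h₂⁻¹)⁻¹ * X.pf h₁ h₃) := by
  rw [X.act'_mul, ← X.pf_eq_act'_pf_inv_inv, ← X.pf_mul_right_eq_mul_act']
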